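/- Upper estimate for the distance between levels of generalized Margulis domains (Proposition 4.7): Let P0, r0, δ > 0 and 0 < ε1 ≤ ε2. Then there exists a constant K0 > 0, depending only on P0, r0, δ, ε1 and ε2, such that for every δ-hyperbolic GCB-space (X,σ) which is P0-packed at scale r0, every non-elliptic σ-isometry g of X with ℳ_{ε1}(g) ≠ ∅, and every point x ∈ ℳ_{ε2}(g), one has d(x, ℳ_{ε1}(g)) ≤ K0. -/

import Mathlib

open Metric Filter

/-- Four-points condition for `δ`-hyperbolicity. -/
def IsDeltaHyperbolic (X : Type*) [MetricSpace X] (δ : ℝ) : Prop :=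
  ∀ x y z w : X,
    dist x y + dist z w ≤ max (dist x z + dist y w) (dist x w + dist y z) + 2 * δ

/-- `X` is `P₀`-packed at scale `r₀`: any subset of a closed ball of radius `3r₀` whose
points are pairwise at distance `> 2r₀` has cardinality at most `P₀`. -/
def IsPacked (X : Type*) [MetricSpace X] (P₀ r₀ : ℝ) : Prop :=
  ∀ x : X, ∀ S : Finset X, (↑S ⊆ closedBall x (3 * r₀)) →
    (∀ a ∈ S, ∀ b ∈ S, a ≠ b → 2 * r₀ < dist a b) → (S.card : ℝ) ≤ P₀

/-- A geodesically complete, convex, consistent, reversible geodesic bicombing on `X`.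
Together with completeness of `X` this is the notion of GCB-space. -/
structure IsGCB {X : Type*} [MetricSpace X] (σ : X → X → ℝ → X) : Prop where
  source : ∀ x y : X, σ x y 0 = x
  target : ∀ x y : X, σ x y 1 = y
  geodesic : ∀ x y : X, ∀ t ∈ Set.Icc (0:ℝ) 1, ∀ t' ∈ Set.Icc (0:ℝ) 1,
    dist (σ x y t) (σ x y t') = |t - t'| * dist x y
  convex : ∀ x y x' y' : X,
    ConvexOn ℝ (Set.Icc (0:ℝ) 1) fun t => dist (σ x y t) (σ x' y' t)
  consistent : ∀ x y : X, ∀ s t l : ℝ, 0 ≤ s → s ≤ t → t ≤ 1 → l ∈ Set.Icc (0:ℝ) 1 →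
    σ (σ x y s) (σ x y t) l = σ x y ((1 - l) * s + l * t)
  reversible : ∀ x y : X, ∀ t ∈ Set.Icc (0:ℝ) 1, σ x y t = σ y x (1 - t)
  geodComplete : ∀ x y : X, ∃ γ : ℝ → X, Isometry γ ∧
    (∀ s t : ℝ, s ≤ t → ∀ l ∈ Set.Icc (0:ℝ) 1, σ (γ s) (γ t) l = γ (s + l * (t - s))) ∧
    (∀ t ∈ Set.Icc (0:ℝ) 1, σ x y t = γ (t * dist x y))

/-- `g` is a `σ`-isometry: a surjective isometry preserving the bicombing `σ`. -/
def IsSigmaIsometry {X : Type*} [MetricSpace X] (σ : X → X → ℝ → X) (g : X ≃ᵢ X) : Prop :=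
  ∀ x y : X, ∀ t ∈ Set.Icc (0:ℝ) 1, g (σ x y t) = σ (g x) (g y) t

/-- A group of isometries is discrete if for every `x` and `R` only finitely many of its
elements displace `x` at most `R`. -/
def IsDiscreteSubgroup {X : Type*} [MetricSpace X] (Γ : Subgroup (X ≃ᵢ X)) : Prop :=
  ∀ x : X, ∀ R : ℝ, {g : X ≃ᵢ X | g ∈ Γ ∧ dist x (g x) ≤ R}.Finite

/-- A group is virtually nilpotent if it has a nilpotent subgroup of finite index. -/
def IsVirtuallyNilpotent (G : Type*) [Group G] : Prop :=
  ∃ H : Subgroup G, H.FiniteIndex ∧ Group.IsNilpotent H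

/-- `Γ` is non-elementary: it contains two elements generating a subgroup that is not
virtually nilpotent. -/
def IsNonElementary {X : Type*} [MetricSpace X] (Γ : Subgroup (X ≃ᵢ X)) : Prop :=
  ∃ a b : X ≃ᵢ X, a ∈ Γ ∧ b ∈ Γ ∧
    ¬ IsVirtuallyNilpotent ↥(Subgroup.closure ({a, b} : Set (X ≃ᵢ X)))

/-- An isometry is non-elliptic if its orbits are unbounded. -/
def IsNonElliptic {X : Type*} [MetricSpace X] (g : X ≃ᵢ X) : Prop :=
  ∀ x : X, ¬ Bornology.IsBounded (Set.range fun n : ℤ => (g ^ n) x)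

/-- The `r`-almost stabilizer `Γ_r(x)`, generated by the elements of `Γ` displacing `x`
at most `r`. -/
def almostStabilizer {X : Type*} [MetricSpace X] (Γ : Subgroup (X ≃ᵢ X)) (r : ℝ) (x : X) :
    Subgroup (X ≃ᵢ X) :=
  Subgroup.closure {g : X ≃ᵢ X | g ∈ Γ ∧ dist x (g x) ≤ r}

/-- The nilpotence radius of `Γ` at `x`. -/
noncomputable def nilrad {X : Type*} [MetricSpace X] (Γ : Subgroup (X ≃ᵢ X)) (x : X) : ℝ :=
  sSup {r : ℝ | 0 ≤ r ∧ IsVirtuallyNilpotent ↥(almostStabilizer Γ r x)}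

/-- The Margulis domain `M_ε(g)`. -/
def margulisDomain {X : Type*} [MetricSpace X] (g : X ≃ᵢ X) (ε : ℝ) : Set X :=
  {x : X | dist x (g x) ≤ ε}

/-- The generalized Margulis domain `ℳ_ε(g) = ⋃_{i ≠ 0} M_ε(gⁱ)`. -/
def genMargulisDomain {X : Type*} [MetricSpace X] (g : X ≃ᵢ X) (ε : ℝ) : Set X :=
  ⋃ i ∈ {i : ℤ | i ≠ 0}, margulisDomain (g ^ i) ε

/-- `f` parameterizes a geodesic segment from `x` to `y` on `[0, dist x y]`. -/
def IsGeodesicFrom {X : Type*} [MetricSpace X] (f : ℝ → X) (x y : X) : Prop :=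
  f 0 = x ∧ f (dist x y) = y ∧
    ∀ s ∈ Set.Icc 0 (dist x y), ∀ t ∈ Set.Icc 0 (dist x y), dist (f s) (f t) = |s - t|

/-- `X` is a geodesic space. -/
def IsGeodesicSpace (X : Type*) [MetricSpace X] : Prop :=
  ∀ x y : X, ∃ f : ℝ → X, IsGeodesicFrom f x y

/-- `C` is `lam`-quasiconvex: any two of its points are joined by a geodesic contained in
the closed `lam`-neighbourhood of `C`. -/
def IsQuasiconvex {X : Type*} [MetricSpace X] (lam : ℝ) (C : Set X) : Prop :=
  ∀ x ∈ C, ∀ y ∈ C, ∃ f : ℝ → X, IsGeodesicFrom f x y ∧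
    ∀ t ∈ Set.Icc 0 (dist x y), infDist (f t) C ≤ lam

/-- `C` is a convex subset: any two of its points are joined by a geodesic inside `C`. -/
def IsConvexSubset {X : Type*} [MetricSpace X] (C : Set X) : Prop :=
  ∀ x ∈ C, ∀ y ∈ C, ∃ f : ℝ → X, IsGeodesicFrom f x y ∧
    ∀ t ∈ Set.Icc 0 (dist x y), f t ∈ C

/-- Arc-length concatenation of three paths, of respective lengths `d₁`, `d₂` and the rest. -/
noncomputable def concatPath {X : Type*} (d₁ d₂ : ℝ) (f₁ f₂ f₃ : ℝ → X) : ℝ → X :=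
  fun t => if t ≤ d₁ then f₁ t else if t ≤ d₁ + d₂ then f₂ (t - d₁) else f₃ (t - d₁ - d₂)

section Packing

variable {X : Type*} [MetricSpace X] {σ : X → X → ℝ → X}

/-- In a GCB-space a segment can be prolonged by any factor `c ≥ 1`. -/
lemma IsGCB.exists_dilation (hσ : IsGCB σ) {c : ℝ} (hc : 1 ≤ c) (x y : X) :
    ∃ z, dist x z = c * dist x y ∧ σ x z c⁻¹ = y := by
  obtain ⟨γ, hγ, hl, hs⟩ := hσ.geodComplete x y
  have hc0 : 0 < c := by linarith
  have h0 : γ 0 = x := by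
    have := hs 0 ⟨le_rfl, zero_le_one⟩
    rw [hσ.source, zero_mul] at this
    exact this.symm
  have h1 : γ (dist x y) = y := by
    have := hs 1 ⟨zero_le_one, le_rfl⟩
    rw [hσ.target, one_mul] at this
    exact this.symm
  have hnn : 0 ≤ c * dist x y := by positivity
  refine ⟨γ (c * dist x y), ?_, ?_⟩
  · nth_rewrite 1 [← h0]
    rw [hγ.dist_eq, Real.dist_eq, zero_sub, abs_neg, abs_of_nonneg hnn]
  · have := hl 0 (c * dist x y) hnn c⁻¹ ⟨by positivity, inv_le_one_of_one_le₀ hc⟩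
    rw [h0] at this
    rw [this, zero_add, sub_zero, inv_mul_cancel_left₀ hc0.ne', h1]

/-- Convexity for two `σ`-geodesics with a common origin. -/
lemma IsGCB.dist_le_of_common_source (hσ : IsGCB σ) (x y z : X) {t : ℝ}
    (ht : t ∈ Set.Icc (0 : ℝ) 1) : dist (σ x y t) (σ x z t) ≤ t * dist y z := by
  have h := (hσ.convex x y x z).2 (Set.left_mem_Icc.2 zero_le_one)
    (Set.right_mem_Icc.2 zero_le_one) (sub_nonneg.2 ht.2) ht.1 (sub_add_cancel 1 t)
  simpa [hσ.source, hσ.target] using h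

lemma IsGCB.exists_dist_le_of_mem_closedBall (hσ : IsGCB σ) {x y : X} {R r : ℝ}
    (hR : 0 ≤ R) (hr : 0 ≤ r) (hy : dist y x ≤ R + r) :
    ∃ z, dist z x ≤ R ∧ dist y z ≤ r := by
  rcases le_total (dist y x) R with h | h
  · exact ⟨y, h, by simpa using hr⟩
  · rcases eq_or_lt_of_le (dist_nonneg (x := y) (y := x)) with h0 | h0
    · exact ⟨y, by linarith, by simpa using hr⟩
    have h0' : dist x y ≠ 0 := by rw [dist_comm]; exact h0.ne'
    have ht : R / dist x y ∈ Set.Icc (0 : ℝ) 1 :=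
      ⟨by positivity, by rw [div_le_one (by rw [dist_comm]; exact h0), dist_comm]; exact h⟩
    refine ⟨σ x y (R / dist x y), ?_, ?_⟩
    · have := hσ.geodesic x y _ ht 0 ⟨le_rfl, zero_le_one⟩
      rw [hσ.source, sub_zero, abs_of_nonneg ht.1, div_mul_cancel₀ _ h0'] at this
      exact this.le
    · have := hσ.geodesic x y 1 ⟨zero_le_one, le_rfl⟩ _ ht
      rw [hσ.target, abs_of_nonneg (by linarith [ht.2]), sub_mul, div_mul_cancel₀ _ h0',
        one_mul] at this
      linarith [dist_comm x y]

lemma Finset.exists_subset_forall_card_le {α : Type*} (S : Finset α) {p : Finset α → Prop}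
    (h0 : p ∅) : ∃ T ⊆ S, p T ∧ ∀ U ⊆ S, p U → U.card ≤ T.card := by
  classical
  obtain ⟨T, hT, hmax⟩ := (S.powerset.filter p).exists_max_image Finset.card
    ⟨∅, by simpa using h0⟩
  rw [Finset.mem_filter, Finset.mem_powerset] at hT
  exact ⟨T, hT.1, hT.2, fun U hU hpU =>
    hmax U (Finset.mem_filter.2 ⟨Finset.mem_powerset.2 hU, hpU⟩)⟩

/-- Packing of balls of arbitrary radius, at the given scale. -/
lemma IsGCB.card_le_pow_of_isPacked (hσ : IsGCB σ) {P₀ r₀ : ℝ} (hP₀ : 0 < P₀) (hr₀ : 0 < r₀)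
    (hp : IsPacked X P₀ r₀) (x : X) (n : ℕ) :
    ∀ S : Finset X, (∀ a ∈ S, dist a x ≤ n * r₀) →
      (∀ a ∈ S, ∀ b ∈ S, a ≠ b → 2 * r₀ < dist a b) → (S.card : ℝ) ≤ P₀ ^ n := by
  classical
  induction n with
  | zero =>
    intro S hS _
    have : S ⊆ {x} := fun a ha => by
      have := hS a ha
      simp only [Nat.cast_zero, zero_mul] at this
      simpa using dist_le_zero.1 this
    have := Finset.card_le_card this
    rw [Finset.card_singleton] at this
    simpa using this
  | succ n ih =>
    intro S hS hsep
    have hex : ∀ a : X, ∃ z, a ∈ S → dist z x ≤ n * r₀ ∧ dist a z ≤ r₀ := by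
      intro a
      by_cases ha : a ∈ S
      · have h := hS a ha
        push_cast at h
        obtain ⟨z, hz⟩ := hσ.exists_dist_le_of_mem_closedBall (R := n * r₀) (r := r₀)
          (by positivity) hr₀.le (x := x) (y := a) (by linarith)
        exact ⟨z, fun _ => hz⟩
      · exact ⟨a, fun h => absurd h ha⟩
    choose f hf using hex
    obtain ⟨T, hTS, hTsep, hmax⟩ := S.exists_subset_forall_card_le
      (p := fun T => ∀ a ∈ T, ∀ b ∈ T, a ≠ b → 2 * r₀ < dist (f a) (f b)) (by simp)
    have hinj : Set.InjOn f T := by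
      intro a ha b hb hab
      by_contra hne
      have := hTsep a ha b hb hne
      rw [hab, dist_self] at this
      linarith
    have hTcard : (T.card : ℝ) ≤ P₀ ^ n := by
      rw [← Finset.card_image_of_injOn hinj]
      apply ih
      · simp only [Finset.mem_image]
        rintro _ ⟨a, ha, rfl⟩
        exact (hf a (hTS ha)).1
      · simp only [Finset.mem_image]
        rintro _ ⟨a, ha, rfl⟩ _ ⟨b, hb, rfl⟩ hab
        exact hTsep a ha b hb fun h => hab (by rw [h])
    have hcov : S ⊆ T.biUnion fun t => S.filter fun s => dist s (f t) ≤ 3 * r₀ := by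
      intro s hs
      simp only [Finset.mem_biUnion, Finset.mem_filter]
      have key : ∃ t ∈ T, dist (f s) (f t) ≤ 2 * r₀ := by
        by_contra! hfar
        have hsT : s ∉ T := fun h => by
          have := hfar s h
          rw [dist_self] at this
          linarith
        have := hmax (insert s T) (Finset.insert_subset hs hTS) (by
          intro a ha b hb hab
          rcases Finset.mem_insert.1 ha with rfl | haT <;>
            rcases Finset.mem_insert.1 hb with rfl | hbT
          · exact absurd rfl hab
          · exact hfar b hbT
          · rw [dist_comm]; exact hfar a haT
          · exact hTsep a haT b hbT hab)
        rw [Finset.card_insert_of_notMem hsT] at this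
        omega
      obtain ⟨t, ht, hst⟩ := key
      exact ⟨t, ht, hs, by linarith [dist_triangle s (f s) (f t), (hf s hs).2]⟩
    have hcard : (S.card : ℝ) ≤
        ∑ t ∈ T, ((S.filter fun s => dist s (f t) ≤ 3 * r₀).card : ℝ) := by
      exact_mod_cast (Finset.card_le_card hcov).trans Finset.card_biUnion_le
    have hsum : ∑ t ∈ T, ((S.filter fun s => dist s (f t) ≤ 3 * r₀).card : ℝ) ≤
        ∑ _t ∈ T, P₀ := by
      refine Finset.sum_le_sum fun t _ => hp (f t) _ ?_ ?_
      · intro s hs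
        exact (Finset.mem_filter.1 (Finset.mem_coe.1 hs)).2
      · intro a ha b hb hab
        exact hsep a (Finset.mem_filter.1 ha).1 b (Finset.mem_filter.1 hb).1 hab
    rw [Finset.sum_const, nsmul_eq_mul] at hsum
    calc (S.card : ℝ) ≤ T.card * P₀ := hcard.trans hsum
      _ ≤ P₀ ^ n * P₀ := by gcongr
      _ = P₀ ^ (n + 1) := (pow_succ _ _).symm

/-- Packing of balls of arbitrary radius at arbitrary scale: points at pairwise distance
greater than `ε` are dilated until they become `2r₀`-separated. -/
lemma IsGCB.card_le_of_isPacked (hσ : IsGCB σ) {P₀ r₀ : ℝ} (hP₀ : 0 < P₀) (hr₀ : 0 < r₀)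
    (hp : IsPacked X P₀ r₀) (x : X) {n : ℕ} {c ε R : ℝ} (hc : 1 ≤ c) (hε : 2 * r₀ ≤ c * ε)
    (hn : c * R ≤ n * r₀) (S : Finset X) (hS : ∀ a ∈ S, dist a x ≤ R)
    (hsep : ∀ a ∈ S, ∀ b ∈ S, a ≠ b → ε < dist a b) : (S.card : ℝ) ≤ P₀ ^ n := by
  classical
  have hc0 : 0 < c := by linarith
  choose f hfd hfσ using fun y => hσ.exists_dilation hc x y
  have hinj : Function.Injective f := fun a b hab => by
    rw [← hfσ a, ← hfσ b, hab]
  rw [← Finset.card_image_of_injective S hinj]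
  apply hσ.card_le_pow_of_isPacked hP₀ hr₀ hp x n
  · simp only [Finset.mem_image]
    rintro _ ⟨a, ha, rfl⟩
    have h1 := hS a ha
    rw [dist_comm, hfd, dist_comm]
    exact (mul_le_mul_of_nonneg_left h1 hc0.le).trans hn
  · simp only [Finset.mem_image]
    rintro _ ⟨a, ha, rfl⟩ _ ⟨b, hb, rfl⟩ hab
    have h1 := hsep a ha b hb fun h => hab (by rw [h])
    have h2 := hσ.dist_le_of_common_source x (f a) (f b) (t := c⁻¹)
      ⟨by positivity, inv_le_one_of_one_le₀ hc⟩
    rw [hfσ, hfσ, inv_mul_eq_div, le_div_iff₀' hc0] at h2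
    have h3 := mul_lt_mul_of_pos_left h1 hc0
    linarith

end Packing

section Isometries

variable {X : Type*} [MetricSpace X] {σ : X → X → ℝ → X}

/-- The group of `σ`-isometries. -/
def sigmaIsometries (σ : X → X → ℝ → X) : Subgroup (X ≃ᵢ X) where
  carrier := {g | IsSigmaIsometry σ g}
  one_mem' := fun _ _ _ _ => rfl
  mul_mem' := fun {a b} ha hb x y t ht => by
    rw [IsometryEquiv.mul_apply, hb x y t ht, ha _ _ t ht]; rfl
  inv_mem' := fun {a} ha x y t ht => by
    apply a.injective
    rw [ha _ _ t ht]
    simp only [IsometryEquiv.apply_inv_self]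

lemma dist_pow_apply_le (h : X ≃ᵢ X) (x : X) (n : ℕ) :
    dist x ((h ^ n) x) ≤ n * dist x (h x) := by
  induction n with
  | zero => simp
  | succ n ih =>
    have h1 := dist_triangle x ((h ^ n) x) ((h ^ (n + 1)) x)
    rw [pow_succ, IsometryEquiv.mul_apply, (h ^ n).dist_eq] at h1
    rw [pow_succ, IsometryEquiv.mul_apply]
    push_cast
    linarith

lemma dist_pow_apply_pow_apply (h : X ≃ᵢ X) (x : X) {m n : ℕ} (hmn : m ≤ n) :
    dist ((h ^ m) x) ((h ^ n) x) = dist x ((h ^ (n - m)) x) := by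
  obtain ⟨k, rfl⟩ := Nat.exists_eq_add_of_le hmn
  rw [pow_add, IsometryEquiv.mul_apply, (h ^ m).dist_eq, Nat.add_sub_cancel_left]

lemma dist_inv_apply_apply (a b : X ≃ᵢ X) (x y : X) :
    dist (a⁻¹ x) (b y) = dist x ((a * b) y) := by
  rw [← a.dist_eq, IsometryEquiv.apply_inv_self, IsometryEquiv.mul_apply]

/-- Passing to the square at least doubles the minimal displacement. -/
lemma IsGCB.two_mul_le_dist_sq (hσ : IsGCB σ) {h : X ≃ᵢ X} (hh : IsSigmaIsometry σ h) {l : ℝ}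
    (hl : ∀ y, l ≤ dist y (h y)) (y : X) : 2 * l ≤ dist y ((h ^ 2) y) := by
  have ht : (1 / 2 : ℝ) ∈ Set.Icc (0 : ℝ) 1 := by constructor <;> norm_num
  have h1 := hσ.dist_le_of_common_source (h y) y (h (h y)) ht
  rw [hσ.reversible (h y) y _ ht, ← hh _ _ _ ht] at h1
  norm_num at h1
  have h2 := hl (σ y (h y) (1 / 2))
  rw [pow_two, IsometryEquiv.mul_apply]
  norm_num at h2
  linarith

lemma IsGCB.two_pow_mul_le_dist (hσ : IsGCB σ) {h : X ≃ᵢ X} (hh : IsSigmaIsometry σ h) {l : ℝ}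
    (hl : ∀ y, l ≤ dist y (h y)) (k : ℕ) : ∀ y, 2 ^ k * l ≤ dist y ((h ^ 2 ^ k) y) := by
  induction k with
  | zero => simpa using hl
  | succ k ih =>
    intro y
    have := hσ.two_mul_le_dist_sq (h := h ^ 2 ^ k)
      ((sigmaIsometries σ).pow_mem hh _) ih y
    rw [← pow_mul, ← pow_succ] at this
    rw [pow_succ]
    linarith

lemma IsGCB.dist_apply_le_of_endpoints (hσ : IsGCB σ) {f : X ≃ᵢ X} (hf : IsSigmaIsometry σ f)
    {ε : ℝ} {u v : X} (hu : dist u (f u) ≤ ε) (hv : dist v (f v) ≤ ε) {t : ℝ}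
    (ht : t ∈ Set.Icc (0 : ℝ) 1) : dist (σ u v t) (f (σ u v t)) ≤ ε := by
  have h := (hσ.convex u v (f u) (f v)).le_max_of_mem_Icc (x := 0) (y := 1) (z := t)
    ⟨le_rfl, zero_le_one⟩ ⟨zero_le_one, le_rfl⟩ ht
  simp only [hσ.source, hσ.target] at h
  rw [hf _ _ _ ht]
  exact h.trans (max_le hu hv)

end Isometries

section Hyperbolic

variable {X : Type*} [MetricSpace X] {σ : X → X → ℝ → X} {δ : ℝ}

/-- A point with small Gromov product of the endpoints is close to the geodesic. -/
lemma IsGCB.exists_dist_le_of_add_le (hσ : IsGCB σ) (hX : IsDeltaHyperbolic X δ) {x u v : X}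
    {C : ℝ} (hC : dist x u + dist x v ≤ dist u v + C) :
    ∃ t ∈ Set.Icc (0 : ℝ) 1, dist x (σ u v t) ≤ C / 2 + 2 * δ := by
  have t1 := dist_triangle u x v
  have t2 := dist_triangle x u v
  have t3 := dist_triangle x v u
  rw [dist_comm u x] at t1
  rw [dist_comm v u] at t3
  obtain ⟨t, ht, hta⟩ : ∃ t ∈ Set.Icc (0 : ℝ) 1,
      t * dist u v = (dist x u + dist u v - dist x v) / 2 := by
    rcases eq_or_lt_of_le (dist_nonneg (x := u) (y := v)) with h0 | h0
    · exact ⟨0, ⟨le_rfl, zero_le_one⟩, by linarith⟩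
    · refine ⟨(dist x u + dist u v - dist x v) / 2 / dist u v, ⟨?_, ?_⟩,
        div_mul_cancel₀ _ h0.ne'⟩
      · apply div_nonneg _ h0.le
        linarith
      · rw [div_le_one h0]
        linarith
  refine ⟨t, ht, ?_⟩
  have d1 := hσ.geodesic u v t ht 0 ⟨le_rfl, zero_le_one⟩
  rw [hσ.source, sub_zero, abs_of_nonneg ht.1] at d1
  have d2 := hσ.geodesic u v 1 ⟨zero_le_one, le_rfl⟩ t ht
  rw [hσ.target, abs_of_nonneg (by linarith [ht.2]), sub_mul, one_mul, dist_comm v] at d2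
  have h := hX x (σ u v t) u v
  rcases le_max_iff.1 (sub_le_iff_le_add.2 h) with h | h <;> linarith

/-- Moving a far away endpoint by a small amount barely changes the Gromov product. -/
lemma IsDeltaHyperbolic.add_le_of_endpoint_near (hX : IsDeltaHyperbolic X δ) {x u v u' : X}
    {C : ℝ} (hC : dist x u + dist x v ≤ dist u v + C)
    (hu : dist u u' + 2 * δ + C < dist x u) :
    dist x u' + dist x v ≤ dist u' v + (C + 2 * δ) := by
  have h := hX u v x u'
  rw [dist_comm u x, dist_comm v x, dist_comm v u'] at h
  rcases le_max_iff.1 (sub_le_iff_le_add.2 h) with h | h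
  · linarith
  · linarith [dist_nonneg (x := x) (y := u')]

/-- If the displacement of the powers of `H` grows faster than `δ` per step, then every point
`x` has a bounded Gromov product with respect to suitable arbitrarily far points of its
`H`-orbit. -/
lemma exists_pow_dist_add_le (hX : IsDeltaHyperbolic X δ) (hδ : 0 < δ) {H : X ≃ᵢ X} {x : X}
    {L : ℝ} (hL : δ < L) (hH : ∀ k : ℕ, 2 ^ k * L ≤ dist x ((H ^ 2 ^ k) x)) (B : ℝ) :
    ∃ M : ℕ, B ≤ dist x ((H ^ M)⁻¹ x) ∧ B ≤ dist x ((H ^ (M + 1)) x) ∧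
      dist x ((H ^ M)⁻¹ x) + dist x ((H ^ (M + 1)) x) ≤
        dist ((H ^ M)⁻¹ x) ((H ^ (M + 1)) x) + (dist x (H x) + 2 * δ) := by
  have hgrow : ∃ M : ℕ, B ≤ dist x ((H ^ M) x) ∧
      dist x ((H ^ M) x) + δ < dist x ((H ^ (M + 1)) x) := by
    by_contra! hno
    have hlin : ∀ k : ℕ, dist x ((H ^ k) x) ≤ |B| + dist x (H x) + k * δ := by
      intro k
      induction k with
      | zero =>
        have := abs_nonneg B
        simp only [pow_zero, IsometryEquiv.coe_one, id, dist_self, Nat.cast_zero, zero_mul]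
        positivity
      | succ k ih =>
        push_cast
        rcases le_or_gt B (dist x ((H ^ k) x)) with hB | hB
        · linarith [hno k hB]
        · have h1 := dist_triangle x ((H ^ k) x) ((H ^ (k + 1)) x)
          rw [dist_pow_apply_pow_apply H x (Nat.le_add_right k 1), Nat.add_sub_cancel_left,
            pow_one] at h1
          have : 0 ≤ (k + 1 : ℝ) * δ := by positivity
          linarith [le_abs_self B]
    obtain ⟨k, hk⟩ := pow_unbounded_of_one_lt ((|B| + dist x (H x)) / (L - δ)) one_lt_two
    rw [div_lt_iff₀ (by linarith)] at hk
    have h1 := hH k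
    have h2 := hlin (2 ^ k)
    push_cast at h2
    linarith
  obtain ⟨M, hM, hM'⟩ := hgrow
  have e1 : dist x ((H ^ M)⁻¹ x) = dist x ((H ^ M) x) := by
    have := dist_inv_apply_apply (H ^ M) 1 x x
    simpa [dist_comm] using this
  have e2 : dist (H x) ((H ^ M)⁻¹ x) = dist x ((H ^ (M + 1)) x) := by
    have := dist_inv_apply_apply (H ^ M) H x x
    rw [dist_comm, this, pow_succ]
  have e3 : dist (H x) ((H ^ (M + 1)) x) = dist x ((H ^ M) x) := by
    rw [pow_succ', IsometryEquiv.mul_apply, H.dist_eq]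
  refine ⟨M, by rw [e1]; exact hM, by linarith, ?_⟩
  have h := hX x ((H ^ (M + 1)) x) (H x) ((H ^ M)⁻¹ x)
  rw [dist_comm ((H ^ (M + 1)) x), dist_comm ((H ^ (M + 1)) x), e1, e2, e3] at h
  rw [e1]
  rcases le_max_iff.1 (sub_le_iff_le_add.2 h) with h | h <;> linarith

/-- If the displacement of the powers of `H` grows faster than `δ` per step, then `x` is at
distance from any non-empty Margulis domain of an isometry commuting with `H` controlled only
by the displacement of `x`. -/
lemma IsGCB.exists_dist_le_of_commute (hσ : IsGCB σ) (hX : IsDeltaHyperbolic X δ) (hδ : 0 < δ)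
    {H f : X ≃ᵢ X} (hf : IsSigmaIsometry σ f) (hc : Commute H f) {x y : X} {L ε : ℝ}
    (hL : δ < L) (hH : ∀ k : ℕ, 2 ^ k * L ≤ dist x ((H ^ 2 ^ k) x))
    (hy : dist y (f y) ≤ ε) :
    ∃ p, dist p (f p) ≤ ε ∧ dist x p ≤ dist x (H x) / 2 + 5 * δ := by
  obtain ⟨M, hu, hv, hC⟩ := exists_pow_dist_add_le hX hδ hL hH
    (dist x y + dist x (H x) + 7 * δ)
  have hmem : ∀ a : X ≃ᵢ X, Commute a f → dist (a y) (f (a y)) ≤ ε := by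
    intro a ha
    rw [← IsometryEquiv.mul_apply, ← ha.eq, IsometryEquiv.mul_apply, a.dist_eq]
    exact hy
  have h1 := hX.add_le_of_endpoint_near (u' := (H ^ M)⁻¹ y) hC
    (by rw [IsometryEquiv.dist_eq]; linarith)
  rw [add_comm (dist x _), dist_comm ((H ^ M)⁻¹ y)] at h1
  have h2 := hX.add_le_of_endpoint_near (u' := (H ^ (M + 1)) y) h1
    (by rw [IsometryEquiv.dist_eq]; linarith)
  obtain ⟨t, ht, hd⟩ := hσ.exists_dist_le_of_add_le hX h2
  exact ⟨_, hσ.dist_apply_le_of_endpoints hf (hmem _ (hc.pow_left (M + 1)))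
    (hmem _ (hc.pow_left M).inv_left) ht, by linarith⟩

/-- A quadrilateral with two opposite sides of equal length: points at the same distance `R`
from the corresponding endpoints are close if `R` is large. -/
lemma IsDeltaHyperbolic.dist_le_of_quadrilateral (hX : IsDeltaHyperbolic X δ)
    {x y p x' y' p' : X} {T R E e : ℝ}
    (hxy : dist x y = T) (hxp : dist x p = R) (hpy : dist p y = T - R)
    (hxy' : dist x' y' = T) (hxp' : dist x' p' = R) (hpy' : dist p' y' = T - R)
    (hx : dist x x' ≤ E) (hy : dist y y' ≤ e) (he : 0 ≤ e) (hR : E ≤ 2 * R) :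
    dist p p' ≤ e + 4 * δ := by
  have h1 := hX p' x x' y'
  have h2 := hX p p' x y
  rw [dist_comm p' x', hxp', hxy', hpy'] at h1
  rw [dist_comm p x, hxp, hxy, hpy] at h2
  have h3 : dist x y' ≤ T + e := by linarith [dist_triangle x y y']
  have h4 : dist p' y ≤ T - R + e := by
    have := dist_triangle p' y' y
    rw [dist_comm y' y] at this
    linarith
  have h5 : dist p' x ≤ R + e + 2 * δ := by
    rcases le_max_iff.1 (sub_le_iff_le_add.2 h1) with h | h <;> linarith
  have hδ : 0 ≤ δ := by
    have := hX x x x x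
    simp only [dist_self, add_zero, max_self, zero_add] at this
    linarith
  rcases le_max_iff.1 (sub_le_iff_le_add.2 h2) with h | h <;> linarith

/-- If `h` displaces `x` at most `ε₂` and displaces some point very little, then some power of
`h` displaces at most `ε` a point at controlled distance from `x`, provided that `ε`-separated
sets in balls of radius `5δ` have less than `N` points. -/
lemma IsGCB.exists_pow_dist_le (hσ : IsGCB σ) (hX : IsDeltaHyperbolic X δ)
    {h : X ≃ᵢ X} {x y : X} {N : ℕ} {ε ε₂ R l : ℝ} (hR : 0 < R) (hRN : N * ε₂ ≤ 2 * R)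
    (hε₂ : 0 ≤ ε₂) (hl : 0 ≤ l) (hlε : l ≤ ε) (hlN : N * l ≤ δ)
    (hN : ∀ (p : X) (S : Finset X), (∀ a ∈ S, dist a p ≤ 5 * δ) →
      (∀ a ∈ S, ∀ b ∈ S, a ≠ b → ε < dist a b) → S.card < N)
    (hx : dist x (h x) ≤ ε₂) (hy : dist y (h y) ≤ l) :
    ∃ (p : X) (k : ℕ), k ≠ 0 ∧ dist p ((h ^ k) p) ≤ ε ∧ dist x p ≤ R := by
  classical
  rcases le_or_gt (dist x y) R with hT | hT
  · exact ⟨y, 1, one_ne_zero, by simpa using hy.trans hlε, hT⟩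
  have hT0 : dist x y ≠ 0 := by linarith
  have ht : R / dist x y ∈ Set.Icc (0 : ℝ) 1 :=
    ⟨by positivity, by rw [div_le_one (by linarith)]; exact hT.le⟩
  have d1 := hσ.geodesic x y 0 ⟨le_rfl, zero_le_one⟩ _ ht
  rw [hσ.source, zero_sub, abs_neg, abs_of_nonneg ht.1, div_mul_cancel₀ _ hT0] at d1
  have d2 := hσ.geodesic x y 1 ⟨zero_le_one, le_rfl⟩ _ ht
  rw [hσ.target, abs_of_nonneg (by linarith [ht.2]), sub_mul, one_mul,
    div_mul_cancel₀ _ hT0, dist_comm y] at d2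
  set p := σ x y (R / dist x y)
  have hpow : ∀ k : ℕ, k < N → ∀ (z : X) (s : ℝ), 0 ≤ s → dist z (h z) ≤ s →
      dist z ((h ^ k) z) ≤ N * s := by
    intro k hk z s hs hz
    have hk' : (k : ℝ) ≤ N := by exact_mod_cast hk.le
    calc dist z ((h ^ k) z) ≤ k * dist z (h z) := dist_pow_apply_le h z k
      _ ≤ N * s := by gcongr
  have hball : ∀ k : ℕ, k < N → dist ((h ^ k) p) p ≤ 5 * δ := by
    intro k hk
    have := hX.dist_le_of_quadrilateral (x' := (h ^ k) x) (y' := (h ^ k) y) (p' := (h ^ k) p)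
      rfl d1 d2 ((h ^ k).dist_eq _ _) (((h ^ k).dist_eq _ _).trans d1)
      (((h ^ k).dist_eq _ _).trans d2) (hpow k hk x ε₂ hε₂ hx) (hpow k hk y l hl hy)
      (by positivity) hRN
    rw [dist_comm]
    linarith
  have key : ∃ m n : ℕ, m < n ∧ dist ((h ^ m) p) ((h ^ n) p) ≤ ε := by
    by_contra! hfar
    have hfar' : ∀ m n : ℕ, m ≠ n → ε < dist ((h ^ m) p) ((h ^ n) p) := by
      intro m n hmn
      rcases lt_or_gt_of_ne hmn with hlt | hlt
      · exact hfar m n hlt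
      · rw [dist_comm]; exact hfar n m hlt
    have hinj : Function.Injective fun k : ℕ => (h ^ k) p := by
      intro m n hmn
      by_contra hne
      have := hfar' m n hne
      simp only at hmn
      rw [hmn, dist_self] at this
      linarith
    have := hN p ((Finset.range N).image fun k => (h ^ k) p)
      (by
        simp only [Finset.mem_image, Finset.mem_range]
        rintro _ ⟨k, hk, rfl⟩
        exact hball k hk)
      (by
        simp only [Finset.mem_image, Finset.mem_range]
        rintro _ ⟨m, _, rfl⟩ _ ⟨n, _, rfl⟩ hmn
        exact hfar' m n fun h => hmn (by rw [h]))
    rw [Finset.card_image_of_injective _ hinj, Finset.card_range] at this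
    exact lt_irrefl _ this
  obtain ⟨m, n, hmn, hd⟩ := key
  rw [dist_pow_apply_pow_apply h p hmn.le] at hd
  exact ⟨p, n - m, by omega, hd, d1.le⟩

end Hyperbolic

lemma mem_genMargulisDomain {X : Type*} [MetricSpace X] {g : X ≃ᵢ X} {ε : ℝ} {x : X} :
    x ∈ genMargulisDomain g ε ↔ ∃ i : ℤ, i ≠ 0 ∧ dist x ((g ^ i) x) ≤ ε := by
  simp [genMargulisDomain, margulisDomain]

/-- **Proposition 4.7**: upper estimate for the distance between levels of generalized
Margulis domains. -/
theorem genMargulis_upper_estimate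
    (P₀ r₀ δ ε₁ ε₂ : ℝ) (hP₀ : 0 < P₀) (hr₀ : 0 < r₀) (hδ : 0 < δ)
    (hε₁ : 0 < ε₁) (h₁₂ : ε₁ ≤ ε₂) :
    ∃ K₀ : ℝ, 0 < K₀ ∧
      ∀ (X : Type*) [MetricSpace X] [CompleteSpace X] (σ : X → X → ℝ → X),
        IsGCB σ → IsDeltaHyperbolic X δ → IsPacked X P₀ r₀ →
        ∀ g : X ≃ᵢ X, IsSigmaIsometry σ g → IsNonElliptic g →
          (genMargulisDomain g ε₁).Nonempty →
          ∀ x ∈ genMargulisDomain g ε₂,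
            infDist x (genMargulisDomain g ε₁) ≤ K₀ := by
  obtain ⟨n, hn⟩ := exists_nat_ge (max 1 (2 * r₀ / ε₁) * (5 * δ) / r₀)
  rw [div_le_iff₀ hr₀] at hn
  obtain ⟨N, hN⟩ := exists_nat_gt (P₀ ^ n)
  have hN0 : (0 : ℝ) < N := lt_trans (by positivity) hN
  have hε₂ : 0 < ε₂ := by linarith
  set l : ℝ := min ε₁ (δ / N)
  have hl : 0 < l := lt_min hε₁ (by positivity)
  obtain ⟨s, hs⟩ := pow_unbounded_of_one_lt (δ / l) one_lt_two
  rw [div_lt_iff₀ hl] at hs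
  refine ⟨N * ε₂ + (2 ^ s * ε₂ / 2 + 5 * δ), by positivity, ?_⟩
  intro X _ _ σ hσ hX hp g hg _ hne x hx
  obtain ⟨y, hy⟩ := hne
  obtain ⟨i, hi, hy⟩ := mem_genMargulisDomain.1 hy
  obtain ⟨j, hj, hx⟩ := mem_genMargulisDomain.1 hx
  have hpow : ∀ m : ℤ, IsSigmaIsometry σ (g ^ m) := fun m =>
    (sigmaIsometries σ).zpow_mem hg m
  by_cases hmin : ∃ z, dist z ((g ^ j) z) ≤ l
  · obtain ⟨z, hz⟩ := hmin
    obtain ⟨p, k, hk, hpk, hxp⟩ := hσ.exists_pow_dist_le hX (h := g ^ j) (N := N)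
      (R := N * ε₂) (by positivity) (by nlinarith) hε₂.le hl.le (min_le_left _ _)
      (by
        rw [mul_comm, ← le_div_iff₀ hN0]
        exact min_le_right _ _)
      (fun p S hS hsep => by
        have h1 := hσ.card_le_of_isPacked hP₀ hr₀ hp p (le_max_left 1 (2 * r₀ / ε₁))
          (by
            rw [← div_le_iff₀ hε₁]
            exact le_max_right _ _) hn S hS hsep
        exact_mod_cast h1.trans_lt hN) hx hz
    have hmem : p ∈ genMargulisDomain g ε₁ :=
      mem_genMargulisDomain.2 ⟨j * k, mul_ne_zero hj (by exact_mod_cast hk), by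
        rw [zpow_mul, zpow_natCast]
        exact hpk⟩
    have : 0 ≤ (2 : ℝ) ^ s * ε₂ / 2 + 5 * δ := by positivity
    linarith [infDist_le_dist_of_mem (x := x) hmem]
  · push Not at hmin
    have hdisp := fun k => hσ.two_pow_mul_le_dist (hpow j) (fun z => (hmin z).le) k
    obtain ⟨p, hpi, hxp⟩ := hσ.exists_dist_le_of_commute hX hδ (H := (g ^ j) ^ 2 ^ s) (hpow i)
      (((Commute.refl g).zpow_zpow j i).pow_left _) (x := x) hs
      (fun k => by
        have := hdisp (s + k) x
        rw [pow_add, pow_add, pow_mul] at this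
        linarith) hy
    have hmem : p ∈ genMargulisDomain g ε₁ := mem_genMargulisDomain.2 ⟨i, hi, hpi⟩
    have h1 := dist_pow_apply_le (g ^ j) x (2 ^ s)
    push_cast at h1
    have h2 : (2 : ℝ) ^ s * dist x ((g ^ j) x) ≤ 2 ^ s * ε₂ := by gcongr
    have h3 : 0 ≤ (N : ℝ) * ε₂ := by positivity
    linarith [infDist_le_dist_of_mem (x := x) hmem]
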